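/- If 𝒜 is an infinite almost disjoint family of infinite subsets of ℕ (i.e., any two distinct members of 𝒜 have finite intersection), then the family of complements {ℕ ∖ A : A ∈ 𝒜} is centered. (Together with the trivial fact that A ∩ B infinite implies A ⊄* ℕ ∖ B, this shows that φ = id and ψ(A) = ℕ ∖ A form a Borel Tukey morphism witnessing 𝔞 ≥_BT 𝔭.) -/

import Mathlib

/-- A family of subsets of ℕ is centered iff every nonempty finite subfamily
has infinite intersection. -/
def Centered (F : Set (Set ℕ)) : Prop :=
  ∀ s : Finset (Set ℕ), ↑s ⊆ F → s.Nonempty → (⋂ A ∈ s, A).Infinite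

/-- If `𝒜` is an infinite almost disjoint family of infinite subsets of ℕ,
then the family of complements `{ℕ ∖ A : A ∈ 𝒜}` is centered. -/
theorem stmt4 (𝒜 : Set (Set ℕ)) (hinf : 𝒜.Infinite)
    (hmem : ∀ A ∈ 𝒜, A.Infinite)
    (had : ∀ A ∈ 𝒜, ∀ B ∈ 𝒜, A ≠ B → (A ∩ B).Finite) :
    Centered (compl '' 𝒜) := by
  intro s hs _
  obtain ⟨B, hB, hBs⟩ := hinf.exists_notMem_finset (s.map ⟨compl, compl_injective⟩)
  have hfin : (⋃ C ∈ s, B ∩ Cᶜ).Finite := by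
    refine s.finite_toSet.biUnion fun C hC => ?_
    obtain ⟨A, hA, rfl⟩ := hs hC
    rw [compl_compl]
    refine had B hB A hA ?_
    rintro rfl
    exact hBs (Finset.mem_map.2 ⟨_, hC, compl_compl _⟩)
  refine ((hmem B hB).diff hfin).mono ?_
  rintro x ⟨hx, hx'⟩
  simp only [Set.mem_iUnion, Set.mem_inter_iff, Set.mem_compl_iff, not_exists, not_and,
    not_not] at hx'
  exact Set.mem_iInter₂.2 fun C hC => hx' C hC hx
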